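/- arXiv:2212.01115 — 9 statements merged into one kernel-verified Lean document; each statement's English description precedes it below -/
import Mathlib

section
/- Let m ≥ 2 be an odd number and n ≥ 1. Then no pair Ã = {A1, A2} of m-order n-dimensional real tensors is of type strong VP; that is, for any such A1, A2 there exist x ≠ y in ℝⁿ such that (A1 x^{m-1} − A1 y^{m-1})_i (A2 x^{m-1} − A2 y^{m-1})_i ≤ 0 for every i ∈ {1,…,n}. -/
open Finset

/-- For an `m`-order `n`-dimensional real tensor `A` (the first index separated, the
remaining `m-1` indices given as a function `Fin (m-1) → Fin n`),
`tProd A x i = (A x^{m-1})_i = ∑_{i2,…,im} a_{i i2 ⋯ im} x_{i2} ⋯ x_{im}`. -/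
noncomputable def tProd {n k : ℕ} (A : Fin n → (Fin k → Fin n) → ℝ)
    (x : Fin n → ℝ) : Fin n → ℝ :=
  fun i => ∑ f : Fin k → Fin n, A i f * ∏ j, x (f j)

/-- There is no pair of odd-order tensors of type strong VP: for any `A1, A2` of odd
order `m ≥ 2` there exist `x ≠ y` with
`(A1 x^{m-1} − A1 y^{m-1})_i (A2 x^{m-1} − A2 y^{m-1})_i ≤ 0` for all `i`. -/
theorem stmt_4 {m n : ℕ} (hm : 2 ≤ m) (hodd : Odd m) (hn : 1 ≤ n)
    (A1 A2 : Fin n → (Fin (m - 1) → Fin n) → ℝ) :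
    ∃ x y : Fin n → ℝ, x ≠ y ∧ ∀ i,
      (tProd A1 x i - tProd A1 y i) * (tProd A2 x i - tProd A2 y i) ≤ 0 := by
  refine ⟨fun _ => 1, fun _ => -1, ?_, ?_⟩
  · intro h
    have := congrFun h ⟨0, hn⟩
    norm_num at this
  · intro i
    have he : Even (m - 1) := Nat.Odd.sub_odd hodd odd_one
    simp [tProd, he.neg_one_pow]
end

section
/- Let m ≥ 2 be an even number and n ≥ 1, and let A1, A2 be m-order n-dimensional real tensors. If the pair Ã = {A1, A2} is of type VP-II, then Ã is of type strong VP. -/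
open Finset

/-- The product `A Z` of an `m`-order tensor `A` with an `(m-1)`-order tensor `Z`:
`(A Z)_i = ∑_{i2,…,im} a_{i i2 ⋯ im} z_{i2 ⋯ im}`. -/
noncomputable def tApplyZ {n k : ℕ} (A : Fin n → (Fin k → Fin n) → ℝ)
    (Z : (Fin k → Fin n) → ℝ) : Fin n → ℝ :=
  fun i => ∑ f : Fin k → Fin n, A i f * Z f

/-- A `k`-order tensor is symmetric if its entries are invariant under all
permutations of its indices. -/
def SymTensor {n k : ℕ} (Z : (Fin k → Fin n) → ℝ) : Prop :=
  ∀ (σ : Equiv.Perm (Fin k)) (f : Fin k → Fin n), Z (f ∘ σ) = Z f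

/-- The pair `{A1, A2}` is of type VP-II: there is no symmetric `(m-1)`-order tensor `Z`
whose diagonal entries are not all zero with `A1 Z ∧ A2 Z ≤ 0 ≤ A1 Z ∨ A2 Z`. -/
def VPII {n k : ℕ} (A1 A2 : Fin n → (Fin k → Fin n) → ℝ) : Prop :=
  ¬ ∃ Z : (Fin k → Fin n) → ℝ, SymTensor Z ∧ (∃ i : Fin n, Z (fun _ => i) ≠ 0) ∧
    ∀ i, min (tApplyZ A1 Z i) (tApplyZ A2 Z i) ≤ 0 ∧
      0 ≤ max (tApplyZ A1 Z i) (tApplyZ A2 Z i)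

/-- The pair `{A1, A2}` is of type strong VP: for all `x ≠ y`,
`max_i (A1 x^{m-1} − A1 y^{m-1})_i (A2 x^{m-1} − A2 y^{m-1})_i > 0`. -/
def StrongVP {n k : ℕ} (A1 A2 : Fin n → (Fin k → Fin n) → ℝ) : Prop :=
  ∀ x y : Fin n → ℝ, x ≠ y → ∃ i,
    0 < (tProd A1 x i - tProd A1 y i) * (tProd A2 x i - tProd A2 y i)

/-- For even order, type VP-II implies type strong VP. -/
theorem stmt_5 {m n : ℕ} (hm : 2 ≤ m) (heven : Even m) (hn : 1 ≤ n)
    (A1 A2 : Fin n → (Fin (m - 1) → Fin n) → ℝ)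
    (hVPII : VPII A1 A2) : StrongVP A1 A2 := by
  by_contra hne
  unfold StrongVP at hne
  push Not at hne
  obtain ⟨x, y, hxy, h⟩ := hne
  have hodd : Odd (m - 1) := Nat.Even.sub_odd (by omega) heven odd_one
  have key : ∀ (A : Fin n → (Fin (m - 1) → Fin n) → ℝ) (i : Fin n),
      tApplyZ A (fun f => ∏ j, x (f j) - ∏ j, y (f j)) i = tProd A x i - tProd A y i := by
    intro A i
    simp only [tApplyZ, tProd, mul_sub, Finset.sum_sub_distrib]
  apply hVPII
  refine ⟨fun f => ∏ j, x (f j) - ∏ j, y (f j), ?_, ?_, ?_⟩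
  · intro σ f
    have hx := Equiv.prod_comp σ (fun j => x (f j))
    have hy := Equiv.prod_comp σ (fun j => y (f j))
    simp only [Function.comp_apply]
    rw [hx, hy]
  · obtain ⟨i, hi⟩ := Function.ne_iff.mp hxy
    refine ⟨i, ?_⟩
    simp only [Finset.prod_const, Finset.card_univ, Fintype.card_fin]
    intro h0
    exact hi (hodd.strictMono_pow.injective (sub_eq_zero.mp h0))
  · intro i
    rw [key, key]
    have hi := h i
    constructor
    · by_contra hc
      rw [not_le, lt_min_iff] at hc
      exact absurd (mul_pos hc.1 hc.2) (not_lt.mpr hi)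
    · by_contra hc
      rw [not_le, max_lt_iff] at hc
      exact absurd (mul_pos_of_neg_of_neg hc.1 hc.2) (not_lt.mpr hi)
end

section
/- Let m ≥ 2 and n ≥ 1, and let A1, A2 be m-order n-dimensional real tensors. The pair Ã = {A1, A2} is of type VR0 if and only if for every q1, q2 ∈ ℝⁿ the solution set of the vertical tensor complementarity problem VTCP(Ã, q̃), i.e. the set {x ∈ ℝⁿ : q1 + A1 x^{m-1} ≥ 0, q2 + A2 x^{m-1} ≥ 0, (q1 + A1 x^{m-1})ᵀ(q2 + A2 x^{m-1}) = 0}, is bounded. -/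
open Finset

/-- `x` solves the vertical tensor complementarity problem VTCP({A1,A2},{q1,q2}):
`q1 + A1 x^{m-1} ≥ 0`, `q2 + A2 x^{m-1} ≥ 0`, and
`(q1 + A1 x^{m-1})ᵀ (q2 + A2 x^{m-1}) = 0`. -/
def VTCPSol {n k : ℕ} (A1 A2 : Fin n → (Fin k → Fin n) → ℝ)
    (q1 q2 x : Fin n → ℝ) : Prop :=
  (∀ i, 0 ≤ q1 i + tProd A1 x i) ∧ (∀ i, 0 ≤ q2 i + tProd A2 x i) ∧
    ∑ i, (q1 i + tProd A1 x i) * (q2 i + tProd A2 x i) = 0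

theorem tProd_smul' {n k : ℕ} (A : Fin n → (Fin k → Fin n) → ℝ) (t : ℝ)
    (x : Fin n → ℝ) (i : Fin n) : tProd A (t • x) i = t ^ k * tProd A x i := by
  simp only [tProd, Pi.smul_apply, smul_eq_mul, Finset.prod_mul_distrib, Finset.prod_const,
    Finset.card_univ, Fintype.card_fin, Finset.mul_sum]
  exact Finset.sum_congr rfl fun f _ => by ring

theorem tProd_cont' {n k : ℕ} (A : Fin n → (Fin k → Fin n) → ℝ) (i : Fin n) :
    Continuous fun x : Fin n → ℝ => tProd A x i := by
  unfold tProd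
  fun_prop

theorem stmt_7 {m n : ℕ} (hm : 2 ≤ m) (hn : 1 ≤ n)
    (A1 A2 : Fin n → (Fin (m - 1) → Fin n) → ℝ) :
    (∀ x : Fin n → ℝ, (∀ i, min (tProd A1 x i) (tProd A2 x i) = 0) → x = 0) ↔
      ∀ q1 q2 : Fin n → ℝ,
        Bornology.IsBounded {x : Fin n → ℝ | VTCPSol A1 A2 q1 q2 x} := by
  have hk : m - 1 ≠ 0 := by omega
  constructor
  · intro h q1 q2
    let g : (Fin n → ℝ) → (Fin n → ℝ) := fun x i => min (tProd A1 x i) (tProd A2 x i)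
    have hg : Continuous g :=
      continuous_pi fun i => (tProd_cont' A1 i).min (tProd_cont' A2 i)
    obtain ⟨c, hc, hcs⟩ : ∃ c : ℝ, 0 < c ∧ ∀ x ∈ Metric.sphere (0 : Fin n → ℝ) 1, c ≤ ‖g x‖ := by
      rcases (Metric.sphere (0 : Fin n → ℝ) 1).eq_empty_or_nonempty with he | hne
      · exact ⟨1, one_pos, by simp [he]⟩
      · obtain ⟨x0, hx0, hmin⟩ := (isCompact_sphere (0 : Fin n → ℝ) 1).exists_isMinOn hne
          hg.norm.continuousOn
        refine ⟨‖g x0‖, ?_, fun x hx => hmin hx⟩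
        rw [norm_pos_iff]
        intro h0
        have := h x0 (fun i => congrFun h0 i)
        simp [this] at hx0
    rw [isBounded_iff_forall_norm_le]
    refine ⟨max 1 ((‖q1‖ + ‖q2‖) / c), ?_⟩
    rintro x ⟨h1, h2, h3⟩
    by_cases hx1 : ‖x‖ ≤ 1
    · exact le_max_of_le_left hx1
    push Not at hx1
    apply le_max_of_le_right
    have hx0 : 0 < ‖x‖ := by linarith
    have hb : ‖g x‖ ≤ ‖q1‖ + ‖q2‖ := by
      rw [pi_norm_le_iff_of_nonneg (by positivity)]
      intro i
      have h3i := (Finset.sum_eq_zero_iff_of_nonneg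
        (fun i _ => mul_nonneg (h1 i) (h2 i))).1 h3 i (Finset.mem_univ i)
      have a1 := abs_le.1 (norm_le_pi_norm q1 i)
      have a2 := abs_le.1 (norm_le_pi_norm q2 i)
      have b1 := h1 i
      have b2 := h2 i
      have n1 := norm_nonneg q1
      have n2 := norm_nonneg q2
      rw [Real.norm_eq_abs, abs_le]
      refine ⟨le_min (by linarith) (by linarith), ?_⟩
      rcases mul_eq_zero.1 h3i with e | e
      · exact (min_le_left _ _).trans (by linarith)
      · exact (min_le_right _ _).trans (by linarith)
    have hs : g x = ‖x‖ ^ (m - 1) • g (‖x‖⁻¹ • x) := by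
      have hx : x = ‖x‖ • (‖x‖⁻¹ • x) := by
        rw [smul_smul, mul_inv_cancel₀ hx0.ne', one_smul]
      ext i
      simp only [g, Pi.smul_apply, smul_eq_mul]
      rw [mul_min_of_nonneg _ _ (by positivity), ← tProd_smul', ← tProd_smul', ← hx]
    have hc' := hcs (‖x‖⁻¹ • x) (by simp [norm_smul, hx0.ne'])
    rw [hs, norm_smul, norm_pow, norm_norm] at hb
    rw [le_div_iff₀ hc]
    calc ‖x‖ * c ≤ ‖x‖ ^ (m - 1) * ‖g (‖x‖⁻¹ • x)‖ :=
          mul_le_mul (le_self_pow₀ hx1.le hk) hc' hc.le (by positivity)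
      _ ≤ _ := hb
  · intro h x hx
    by_contra hne
    obtain ⟨C, hC⟩ := isBounded_iff_forall_norm_le.1 (h 0 0)
    have hxp : 0 < ‖x‖ := norm_pos_iff.2 hne
    have hC' : ∀ t : ℝ, 0 ≤ t → t * ‖x‖ ≤ C := by
      intro t ht
      have := hC (t • x) ?_
      · rwa [norm_smul, Real.norm_of_nonneg ht] at this
      · have p := pow_nonneg ht (m - 1)
        refine ⟨fun i => ?_, fun i => ?_, Finset.sum_eq_zero fun i _ => ?_⟩
        · rw [tProd_smul', Pi.zero_apply, zero_add]
          exact mul_nonneg p ((hx i).symm.le.trans (min_le_left _ _))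
        · rw [tProd_smul', Pi.zero_apply, zero_add]
          exact mul_nonneg p ((hx i).symm.le.trans (min_le_right _ _))
        · rw [tProd_smul', tProd_smul', Pi.zero_apply]
          rcases min_choice (tProd A1 x i) (tProd A2 x i) with e | e <;>
            rw [hx i] at e <;> simp [← e]
    have := hC' ((|C| + 1) / ‖x‖) (by positivity)
    rw [div_mul_cancel₀ _ hxp.ne'] at this
    linarith [le_abs_self C]
end

section
/- Let m ≥ 2 and n ≥ 1, and let A1, A2 be m-order n-dimensional real tensors. The pair Ã = {A1, A2} is of type VE if and only if for all q1 ≥ 0 and q2 ≥ 0 in ℝⁿ, every solution x of the vertical tensor complementarity problem VTCP(Ã, q̃) satisfies x = 0 (that is, the VTCP has at most the zero solution). -/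
open Finset

/-- `{A1, A2}` is of type VE iff for all `q1 ≥ 0`, `q2 ≥ 0` the VTCP has at most the
zero solution. -/
theorem stmt_9 {m n : ℕ} (hm : 2 ≤ m) (hn : 1 ≤ n)
    (A1 A2 : Fin n → (Fin (m - 1) → Fin n) → ℝ) :
    (∀ x : Fin n → ℝ, (∀ i, min (tProd A1 x i) (tProd A2 x i) ≤ 0) → x = 0) ↔
      ∀ q1 q2 : Fin n → ℝ, (∀ i, 0 ≤ q1 i) → (∀ i, 0 ≤ q2 i) →
        ∀ x : Fin n → ℝ, VTCPSol A1 A2 q1 q2 x → x = 0 := by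
  constructor
  · intro h q1 q2 h1 h2 x hx
    obtain ⟨ha, hb, hs⟩ := hx
    apply h
    intro i
    have hz := (Finset.sum_eq_zero_iff_of_nonneg
      (fun i _ => mul_nonneg (ha i) (hb i))).1 hs i (Finset.mem_univ i)
    rcases mul_eq_zero.1 hz with h0 | h0
    · exact min_le_iff.2 (Or.inl (by linarith [h1 i]))
    · exact min_le_iff.2 (Or.inr (by linarith [h2 i]))
  · intro h x hx
    apply h (fun i => max (-tProd A1 x i) 0) (fun i => max (-tProd A2 x i) 0)
      (fun i => le_max_right _ _) (fun i => le_max_right _ _) x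
    refine ⟨fun i => ?_, fun i => ?_, Finset.sum_eq_zero fun i _ => ?_⟩
    · have := le_max_left (-tProd A1 x i) 0
      simp only
      linarith
    · have := le_max_left (-tProd A2 x i) 0
      simp only
      linarith
    · rcases min_le_iff.1 (hx i) with h0 | h0
      · have : max (-tProd A1 x i) 0 = -tProd A1 x i := max_eq_left (by linarith)
        simp [this]
      · have : max (-tProd A2 x i) 0 = -tProd A2 x i := max_eq_left (by linarith)
        simp [this]
end

section
/- Let m ≥ 2 be an even number and n ≥ 1, and let A1, A2 be m-order n-dimensional real tensors. If the pair Ã = {A1, A2} is of type VP-II, then for all q1, q2 ∈ ℝⁿ the vertical tensor complementarity problem VTCP(Ã, q̃) has at most one solution. -/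
open Finset

/-- For even order, if `{A1, A2}` is of type VP-II then the VTCP has at most one solution
for all `q1, q2`. -/
theorem stmt_11 {m n : ℕ} (hm : 2 ≤ m) (heven : Even m) (hn : 1 ≤ n)
    (A1 A2 : Fin n → (Fin (m - 1) → Fin n) → ℝ)
    (hVPII : VPII A1 A2) :
    ∀ q1 q2 x y : Fin n → ℝ,
      VTCPSol A1 A2 q1 q2 x → VTCPSol A1 A2 q1 q2 y → x = y := by
  intro q1 q2 x y hx hy
  by_contra hne
  apply hVPII
  have hodd : Odd (m - 1) := Nat.Even.sub_odd (by omega) heven odd_one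
  obtain ⟨hx1, hx2, hx3⟩ := hx
  obtain ⟨hy1, hy2, hy3⟩ := hy
  rw [Finset.sum_eq_zero_iff_of_nonneg (fun i _ => mul_nonneg (hx1 i) (hx2 i))] at hx3
  rw [Finset.sum_eq_zero_iff_of_nonneg (fun i _ => mul_nonneg (hy1 i) (hy2 i))] at hy3
  have key : ∀ (A : Fin n → (Fin (m - 1) → Fin n) → ℝ) (i : Fin n),
      tApplyZ A (fun f => ∏ j, x (f j) - ∏ j, y (f j)) i = tProd A x i - tProd A y i := by
    intro A i
    simp only [tApplyZ, tProd, mul_sub, Finset.sum_sub_distrib]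
  refine ⟨fun f => ∏ j, x (f j) - ∏ j, y (f j), ?_, ?_, ?_⟩
  · intro σ f
    have h : ∀ z : Fin n → ℝ, ∏ j, z ((f ∘ σ) j) = ∏ j, z (f j) := fun z =>
      Equiv.prod_comp σ (fun j => z (f j))
    simp only [h]
  · obtain ⟨i, hi⟩ := Function.ne_iff.mp hne
    refine ⟨i, ?_⟩
    simp only [Finset.prod_const, Finset.card_univ, Fintype.card_fin]
    intro h
    exact hi (hodd.strictMono_pow.injective (sub_eq_zero.mp h))
  · intro i
    rw [key, key]
    have h1 := hx1 i
    have h2 := hx2 i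
    have h3 := hy1 i
    have h4 := hy2 i
    constructor
    · rw [min_le_iff]
      rcases mul_eq_zero.mp (hx3 i (Finset.mem_univ i)) with h | h
      · left; linarith
      · right; linarith
    · rw [le_max_iff]
      rcases mul_eq_zero.mp (hy3 i (Finset.mem_univ i)) with h | h
      · left; linarith
      · right; linarith
end

section
/- Let m ≥ 2 be an even number and n ≥ 1, and let A1, A2 be m-order n-dimensional real tensors. If for all q1, q2 ∈ ℝⁿ the vertical tensor complementarity problem VTCP(Ã, q̃) has at most one solution, then the pair Ã = {A1, A2} is of type VP-I. -/
open Finset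

/-- For even order, if the VTCP has at most one solution for all `q1, q2`, then
`{A1, A2}` is of type VP-I. -/
theorem stmt_12 {m n : ℕ} (hm : 2 ≤ m) (heven : Even m) (hn : 1 ≤ n)
    (A1 A2 : Fin n → (Fin (m - 1) → Fin n) → ℝ)
    (huniq : ∀ q1 q2 x y : Fin n → ℝ,
      VTCPSol A1 A2 q1 q2 x → VTCPSol A1 A2 q1 q2 y → x = y) :
    ¬ ∃ x : Fin n → ℝ, x ≠ 0 ∧ ((∀ i, 0 ≤ x i) ∨ (∀ i, x i ≤ 0)) ∧
      (∀ i, min (tProd A1 x i) (tProd A2 x i) ≤ 0 ∧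
        0 ≤ max (tProd A1 x i) (tProd A2 x i)) := by
  rintro ⟨x, hx, -, h⟩
  have h0 : ∀ (A : Fin n → (Fin (m - 1) → Fin n) → ℝ) (i : Fin n), tProd A 0 i = 0 := by
    intro A i
    unfold tProd
    apply Finset.sum_eq_zero
    intro f _
    have : ∏ j, (0 : Fin n → ℝ) (f j) = 0 :=
      Finset.prod_eq_zero (Finset.mem_univ (⟨0, by omega⟩ : Fin (m - 1))) rfl
    rw [this, mul_zero]
  apply hx
  apply huniq (fun i => max (-tProd A1 x i) 0) (fun i => max (-tProd A2 x i) 0) x 0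
  · refine ⟨fun i => ?_, fun i => ?_, Finset.sum_eq_zero fun i _ => ?_⟩
    · have := le_max_left (-tProd A1 x i) 0
      simp only
      linarith
    · have := le_max_left (-tProd A2 x i) 0
      simp only
      linarith
    · rcases min_le_iff.1 (h i).1 with h1 | h1
      · simp only
        rw [max_eq_left (by linarith : (0 : ℝ) ≤ -tProd A1 x i)]
        ring
      · simp only
        rw [max_eq_left (by linarith : (0 : ℝ) ≤ -tProd A2 x i)]
        ring
  · refine ⟨fun i => ?_, fun i => ?_, Finset.sum_eq_zero fun i _ => ?_⟩
    · simp [h0]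
    · simp [h0]
    · simp only [h0, add_zero]
      rcases le_max_iff.1 (h i).2 with h1 | h1
      · rw [max_eq_right (by linarith : -tProd A1 x i ≤ 0), zero_mul]
      · rw [max_eq_right (by linarith : -tProd A2 x i ≤ 0), mul_zero]
end

section
/- Let m ≥ 2 and n ≥ 1, and let A1, A2 be m-order n-dimensional real tensors. If the pair Ã = {A1, A2} is of type strong VP, then for all q1, q2 ∈ ℝⁿ the vertical tensor complementarity problem VTCP(Ã, q̃) has at most one solution. -/
open Finset

/-- If `{A1, A2}` is of type strong VP then the VTCP has at most one solution for all
`q1, q2`. -/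
theorem stmt_13 {m n : ℕ} (hm : 2 ≤ m) (hn : 1 ≤ n)
    (A1 A2 : Fin n → (Fin (m - 1) → Fin n) → ℝ)
    (hSVP : StrongVP A1 A2) :
    ∀ q1 q2 x y : Fin n → ℝ,
      VTCPSol A1 A2 q1 q2 x → VTCPSol A1 A2 q1 q2 y → x = y := by
  rintro q1 q2 x y ⟨hx1, hx2, hx⟩ ⟨hy1, hy2, hy⟩
  by_contra hne
  obtain ⟨i, hi⟩ := hSVP x y hne
  have ex := (Finset.sum_eq_zero_iff_of_nonneg
    (fun i _ => mul_nonneg (hx1 i) (hx2 i))).1 hx i (Finset.mem_univ i)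
  have ey := (Finset.sum_eq_zero_iff_of_nonneg
    (fun i _ => mul_nonneg (hy1 i) (hy2 i))).1 hy i (Finset.mem_univ i)
  have h1 := mul_nonneg (hx1 i) (hy2 i)
  have h2 := mul_nonneg (hy1 i) (hx2 i)
  have e : (tProd A1 x i - tProd A1 y i) * (tProd A2 x i - tProd A2 y i)
      = (q1 i + tProd A1 x i) * (q2 i + tProd A2 x i)
        + (q1 i + tProd A1 y i) * (q2 i + tProd A2 y i)
        - (q1 i + tProd A1 x i) * (q2 i + tProd A2 y i)
        - (q1 i + tProd A1 y i) * (q2 i + tProd A2 x i) := by ring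
  linarith
end

section
/- Let m > 2 be an even number and n ≥ 1, and let A1, A2 be m-order n-dimensional real tensors. If the pair Ã = {A1, A2} is of type VP-II and A2 is an R-tensor, then for all q1, q2 ∈ ℝⁿ the vertical tensor complementarity problem VTCP(Ã, q̃) has a unique solution. -/
open Finset

/-- `A` is an R-tensor: there is no `x ≥ 0`, `x ≠ 0` and `t ≥ 0` such that
`(A x^{m-1})_i + t = 0` whenever `x_i > 0` and `(A x^{m-1})_j + t ≥ 0` whenever `x_j = 0`. -/
def RTensor {n k : ℕ} (A : Fin n → (Fin k → Fin n) → ℝ) : Prop :=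
  ¬ ∃ (x : Fin n → ℝ) (t : ℝ), (∀ i, 0 ≤ x i) ∧ x ≠ 0 ∧ 0 ≤ t ∧
    (∀ i, 0 < x i → tProd A x i + t = 0) ∧ (∀ j, x j = 0 → 0 ≤ tProd A x j + t)

lemma quant_P {n : ℕ} (hn : 1 ≤ n) (M1 M2 : (Fin n → ℝ) →ₗ[ℝ] (Fin n → ℝ))
    (hP : ∀ y, y ≠ 0 → ∃ i, 0 < M1 y i * M2 y i) :
    ∃ c : ℝ, 0 < c ∧ ∀ y, ∃ i, c * ‖y‖ ^ 2 ≤ M1 y i * M2 y i := by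
  have : Nonempty (Fin n) := ⟨⟨0, hn⟩⟩
  have c1 : Continuous M1 := M1.continuous_of_finiteDimensional
  have c2 : Continuous M2 := M2.continuous_of_finiteDimensional
  let g : (Fin n → ℝ) → ℝ := fun y =>
    (univ : Finset (Fin n)).sup' univ_nonempty (fun i => M1 y i * M2 y i)
  have hg : Continuous g := by
    apply Continuous.finset_sup'_apply
    intro i _
    exact ((continuous_apply i).comp c1).mul ((continuous_apply i).comp c2)
  have hne : (Metric.sphere (0 : Fin n → ℝ) 1).Nonempty :=
    NormedSpace.sphere_nonempty.2 zero_le_one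
  obtain ⟨y0, hy0, hmin⟩ := (isCompact_sphere (0 : Fin n → ℝ) 1).exists_isMinOn hne hg.continuousOn
  have hy0' : y0 ≠ 0 := by
    rintro rfl
    simp at hy0
  refine ⟨g y0, ?_, ?_⟩
  · obtain ⟨i, hi⟩ := hP y0 hy0'
    exact lt_of_lt_of_le hi (Finset.le_sup' (fun i => M1 y0 i * M2 y0 i) (mem_univ i))
  · intro y
    by_cases hy : y = 0
    · subst hy
      exact ⟨⟨0, hn⟩, by simp⟩
    have hny : 0 < ‖y‖ := norm_pos_iff.2 hy
    have hu : ‖y‖⁻¹ • y ∈ Metric.sphere (0 : Fin n → ℝ) 1 := by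
      simp [norm_smul, hny.ne']
    have h1 : g y0 ≤ g (‖y‖⁻¹ • y) := hmin hu
    obtain ⟨i, _, hi⟩ := Finset.exists_mem_eq_sup' (univ_nonempty : (univ : Finset (Fin n)).Nonempty)
      (fun i => M1 (‖y‖⁻¹ • y) i * M2 (‖y‖⁻¹ • y) i)
    refine ⟨i, ?_⟩
    have h2 : g y0 ≤ M1 (‖y‖⁻¹ • y) i * M2 (‖y‖⁻¹ • y) i := h1.trans hi.le
    simp only [map_smul, Pi.smul_apply, smul_eq_mul] at h2
    calc g y0 * ‖y‖ ^ 2 ≤ (‖y‖⁻¹ * M1 y i * (‖y‖⁻¹ * M2 y i)) * ‖y‖ ^ 2 := by gcongr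
      _ = M1 y i * M2 y i := by field_simp

lemma lin_bound {n : ℕ} (M : (Fin n → ℝ) →ₗ[ℝ] (Fin n → ℝ)) :
    ∃ K : ℝ, 0 < K ∧ ∀ y i, |M y i| ≤ K * ‖y‖ := by
  refine ⟨‖LinearMap.toContinuousLinearMap M‖ + 1, by positivity, fun y i => ?_⟩
  have h1 := (LinearMap.toContinuousLinearMap M).le_opNorm y
  have h2 := norm_le_pi_norm (M y) i
  rw [Real.norm_eq_abs] at h2
  have h3 : ‖M y‖ ≤ ‖LinearMap.toContinuousLinearMap M‖ * ‖y‖ := h1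
  nlinarith [norm_nonneg y]

lemma compl_mul {a b a' b' : ℝ} (ha : 0 ≤ a) (hb : 0 ≤ b) (h : a * b = 0)
    (ha' : 0 ≤ a') (hb' : 0 ≤ b') (h' : a' * b' = 0) : (a - a') * (b - b') ≤ 0 := by
  nlinarith [mul_nonneg ha hb', mul_nonneg ha' hb]

lemma exists_lcp {n : ℕ} (hn : 1 ≤ n) (M1 M2 : (Fin n → ℝ) →ₗ[ℝ] (Fin n → ℝ))
    (hP : ∀ y, y ≠ 0 → ∃ i, 0 < M1 y i * M2 y i) (q1 q2 : Fin n → ℝ) (S : Finset (Fin n)) :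
    ∀ a : Fin n → ℝ, ∃ y, (∀ i, i ∉ S → q2 i + M2 y i = a i) ∧
      ∀ i, i ∈ S → 0 ≤ q1 i + M1 y i ∧ 0 ≤ q2 i + M2 y i ∧
        (q1 i + M1 y i) * (q2 i + M2 y i) = 0 := by
  obtain ⟨c, hc, hcP⟩ := quant_P hn M1 M2 hP
  obtain ⟨K1, hK1, hb1⟩ := lin_bound M1
  obtain ⟨K2, hK2, hb2⟩ := lin_bound M2
  induction S using Finset.induction_on with
  | empty =>
    intro a
    have hinj : Function.Injective M2 := by
      rw [injective_iff_map_eq_zero]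
      intro y hy
      by_contra hne
      obtain ⟨i, hi⟩ := hP y hne
      simp [hy] at hi
    obtain ⟨y, hy⟩ := LinearMap.surjective_of_injective hinj (a - q2)
    exact ⟨y, fun i _ => by simp [hy], by simp⟩
  | insert j S hj ih =>
    intro a
    choose Y hY1 hY2 using fun t : ℝ => ih (Function.update a j t)
    have hYj : ∀ t, q2 j + M2 (Y t) j = t := fun t => by simpa using hY1 t j hj
    have key : ∀ s t, c * ‖Y s - Y t‖ ^ 2 ≤ M1 (Y s - Y t) j * (s - t) := by
      intro s t
      by_cases hd : Y s - Y t = 0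
      · simp [hd]
      have hpos : 0 < ‖Y s - Y t‖ := norm_pos_iff.2 hd
      obtain ⟨i, hi⟩ := hcP (Y s - Y t)
      have hi0 : 0 < M1 (Y s - Y t) i * M2 (Y s - Y t) i := lt_of_lt_of_le (by positivity) hi
      by_cases hij : i = j
      · subst hij
        have : M2 (Y s - Y t) i = s - t := by
          have e1 := hYj s
          have e2 := hYj t
          simp only [map_sub, Pi.sub_apply]
          linarith
        rwa [this] at hi
      exfalso
      by_cases hiS : i ∈ S
      · obtain ⟨p1, p2, p3⟩ := hY2 s i hiS
        obtain ⟨r1, r2, r3⟩ := hY2 t i hiS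
        have := compl_mul p1 p2 p3 r1 r2 r3
        simp only [map_sub, Pi.sub_apply] at hi0
        nlinarith
      · have e1 := hY1 s i hiS
        have e2 := hY1 t i hiS
        rw [Function.update_of_ne hij] at e1 e2
        have : M2 (Y s - Y t) i = 0 := by
          simp only [map_sub, Pi.sub_apply]
          linarith
        simp [this] at hi0
    have lip : ∀ s t, ‖Y s - Y t‖ ≤ K1 / c * |s - t| := by
      intro s t
      by_cases hd : Y s - Y t = 0
      · simp only [hd, norm_zero]; positivity
      have hpos : 0 < ‖Y s - Y t‖ := norm_pos_iff.2 hd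
      have h1 : M1 (Y s - Y t) j * (s - t) ≤ K1 * ‖Y s - Y t‖ * |s - t| := by
        refine (le_abs_self _).trans ?_
        rw [abs_mul]
        gcongr
        exact hb1 _ _
      have h2 : ‖Y s - Y t‖ * (c * ‖Y s - Y t‖) ≤ ‖Y s - Y t‖ * (K1 * |s - t|) := by
        nlinarith [key s t]
      have h3 := le_of_mul_le_mul_left h2 hpos
      rw [div_mul_eq_mul_div, le_div_iff₀ hc]
      linarith
    have hcont : Continuous Y := by
      have : LipschitzWith (Real.toNNReal (K1 / c)) Y := by
        apply LipschitzWith.of_dist_le_mul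
        intro s t
        rw [dist_eq_norm, Real.dist_eq, Real.coe_toNNReal _ (by positivity)]
        exact lip s t
      exact this.continuous
    let φ : ℝ → ℝ := fun t => q1 j + M1 (Y t) j
    have hφ : Continuous φ := continuous_const.add ((continuous_apply j).comp
      (M1.continuous_of_finiteDimensional.comp hcont))
    have grow : ∀ t, 0 < t → φ 0 + c / K2 ^ 2 * t ≤ φ t := by
      intro t ht
      have h1 := key t 0
      have h2 := hb2 (Y t - Y 0) j
      have h3 : M2 (Y t - Y 0) j = t := by
        have e1 := hYj t
        have e2 := hYj 0
        simp only [map_sub, Pi.sub_apply]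
        linarith
      rw [h3, abs_of_pos ht] at h2
      have h4 : t ^ 2 ≤ K2 ^ 2 * ‖Y t - Y 0‖ ^ 2 := by
        rw [← mul_pow]; gcongr
      have h5 : c / K2 ^ 2 * t * t ≤ M1 (Y t - Y 0) j * t := by
        calc c / K2 ^ 2 * t * t = c / K2 ^ 2 * t ^ 2 := by ring
          _ ≤ c / K2 ^ 2 * (K2 ^ 2 * ‖Y t - Y 0‖ ^ 2) := by gcongr
          _ = c * ‖Y t - Y 0‖ ^ 2 := by field_simp
          _ ≤ _ := by simpa using h1
      have h6 := le_of_mul_le_mul_right h5 ht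
      simp only [map_sub, Pi.sub_apply] at h6
      simp only [φ]
      linarith
    have fin : ∃ t, 0 ≤ t ∧ 0 ≤ φ t ∧ φ t * t = 0 := by
      by_cases h0 : 0 ≤ φ 0
      · exact ⟨0, le_rfl, h0, by simp⟩
      push Not at h0
      have hd : 0 < c / K2 ^ 2 := by positivity
      let T := -φ 0 / (c / K2 ^ 2)
      have hT : 0 < T := div_pos (by linarith) hd
      have h1 : 0 ≤ φ T := by
        have := grow T hT
        have h2 : c / K2 ^ 2 * T = -φ 0 := mul_div_cancel₀ _ hd.ne'
        linarith
      obtain ⟨t, ht, hte⟩ := intermediate_value_Icc hT.le hφ.continuousOn ⟨h0.le, h1⟩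
      exact ⟨t, ht.1, hte.ge, by rw [hte, zero_mul]⟩
    obtain ⟨t, ht0, ht1, ht2⟩ := fin
    refine ⟨Y t, ?_, ?_⟩
    · intro i hi
      rw [Finset.mem_insert, not_or] at hi
      rw [hY1 t i hi.2, Function.update_of_ne hi.1]
    · intro i hi
      rcases Finset.mem_insert.1 hi with rfl | hi
      · rw [hYj t]
        exact ⟨ht1, ht0, ht2⟩
      · exact hY2 t i hi

lemma odd_pow_surj {k : ℕ} (hk : Odd k) (y : ℝ) : ∃ x : ℝ, x ^ k = y := by
  rcases le_total 0 y with h | h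
  · exact ⟨y ^ ((k : ℝ)⁻¹), Real.rpow_inv_natCast_pow h hk.pos.ne'⟩
  · refine ⟨-((-y) ^ ((k : ℝ)⁻¹)), ?_⟩
    rw [hk.neg_pow, Real.rpow_inv_natCast_pow (by linarith) hk.pos.ne', neg_neg]

/-- tensor application as a linear map -/
noncomputable def tLin {n k : ℕ} (A : Fin n → (Fin k → Fin n) → ℝ) :
    ((Fin k → Fin n) → ℝ) →ₗ[ℝ] (Fin n → ℝ) where
  toFun := tApplyZ A
  map_add' Z W := by
    ext i; simp [tApplyZ, mul_add, Finset.sum_add_distrib]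
  map_smul' r Z := by
    ext i; simp [tApplyZ, Finset.mul_sum, mul_left_comm]

/-- diagonal tensor with given diagonal -/
noncomputable def dLin (n k : ℕ) : (Fin n → ℝ) →ₗ[ℝ] ((Fin k → Fin n) → ℝ) where
  toFun y := fun f => ∑ i, if (∀ j, f j = i) then y i else 0
  map_add' y z := by
    ext f
    simp only [Pi.add_apply, ← Finset.sum_add_distrib]
    refine Finset.sum_congr rfl fun i _ => ?_
    split_ifs <;> simp
  map_smul' r y := by
    ext f
    simp [Finset.mul_sum]

lemma dLin_sym {n k : ℕ} (y : Fin n → ℝ) : SymTensor (dLin n k y) := by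
  intro σ f
  simp only [dLin, LinearMap.coe_mk, AddHom.coe_mk, Function.comp]
  refine Finset.sum_congr rfl fun i _ => ?_
  have : (∀ j, f (σ j) = i) ↔ ∀ j, f j = i := σ.forall_congr_left.trans (by simp)
  simp only [this]

lemma dLin_diag {n k : ℕ} (hk : 0 < k) (y : Fin n → ℝ) (i : Fin n) :
    dLin n k y (fun _ => i) = y i := by
  have : Nonempty (Fin k) := ⟨⟨0, hk⟩⟩
  simp [dLin]

lemma sym_factor {n k : ℕ} (hk : 0 < k) (A : Fin n → (Fin k → Fin n) → ℝ)
    (hA : ∀ Z, SymTensor Z → tLin A Z = 0 → ∀ i, Z (fun _ => i) = 0)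
    (Z : (Fin k → Fin n) → ℝ) (hZ : SymTensor Z) :
    tLin A Z = tLin A (dLin n k (fun i => Z (fun _ => i))) := by
  have hinj : Function.Injective ((tLin A).comp (dLin n k)) := by
    rw [injective_iff_map_eq_zero]
    intro y hy
    ext i
    rw [← dLin_diag hk y i]
    exact hA _ (dLin_sym y) hy i
  obtain ⟨y, hy⟩ := LinearMap.surjective_of_injective hinj (tLin A Z)
  have hs : SymTensor (Z - dLin n k y) := by
    intro σ f
    simp only [Pi.sub_apply, hZ σ f, dLin_sym y σ f]
  have h := hA _ hs (by rw [map_sub, ← hy]; simp)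
  have : (fun i => Z (fun _ => i)) = y := by
    ext i
    have := h i
    rw [Pi.sub_apply, dLin_diag hk] at this
    linarith
  rw [this, ← hy]; rfl

lemma tProd_eq {n k : ℕ} (hk : 0 < k) (A : Fin n → (Fin k → Fin n) → ℝ)
    (hA : ∀ Z, SymTensor Z → tLin A Z = 0 → ∀ i, Z (fun _ => i) = 0) (x : Fin n → ℝ) :
    tProd A x = ((tLin A).comp (dLin n k)) (fun i => x i ^ k) := by
  have hs : SymTensor (fun f : Fin k → Fin n => ∏ j, x (f j)) := by
    intro σ f
    exact Equiv.prod_comp σ (fun j => x (f j))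
  have h := sym_factor hk A hA _ hs
  simp only [Finset.prod_const, Finset.card_univ, Fintype.card_fin] at h
  exact h

/-- If `m > 2` is even, `{A1, A2}` is of type VP-II and `A2` is an R-tensor, then the
VTCP has a unique solution for all `q1, q2`. -/
theorem stmt_15 {m n : ℕ} (hm : 2 < m) (heven : Even m) (hn : 1 ≤ n)
    (A1 A2 : Fin n → (Fin (m - 1) → Fin n) → ℝ)
    (hVPII : VPII A1 A2) (hR : RTensor A2) :
    ∀ q1 q2 : Fin n → ℝ, ∃! x : Fin n → ℝ, VTCPSol A1 A2 q1 q2 x := by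
  have hk : 0 < m - 1 := by omega
  have hodd : Odd (m - 1) := by
    obtain ⟨r, hr⟩ := heven
    exact ⟨r - 1, by omega⟩
  have hV : ∀ Z, SymTensor Z → (∀ i, tLin A1 Z i * tLin A2 Z i ≤ 0) →
      ∀ i, Z (fun _ => i) = 0 := by
    intro Z hZ h i
    by_contra hne
    refine hVPII ⟨Z, hZ, ⟨i, hne⟩, fun l => ?_⟩
    have hl : tApplyZ A1 Z l * tApplyZ A2 Z l ≤ 0 := h l
    rcases mul_nonpos_iff.1 hl with ⟨h1, h2⟩ | ⟨h1, h2⟩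
    · exact ⟨min_le_of_right_le h2, le_max_of_le_left h1⟩
    · exact ⟨min_le_of_left_le h1, le_max_of_le_right h2⟩
  have hA1 := tProd_eq hk A1 (fun Z hZ h => hV Z hZ (fun i => by simp [h]))
  have hA2 := tProd_eq hk A2 (fun Z hZ h => hV Z hZ (fun i => by simp [h]))
  generalize hM1 : (tLin A1).comp (dLin n (m - 1)) = M1 at hA1
  generalize hM2 : (tLin A2).comp (dLin n (m - 1)) = M2 at hA2
  have hP0 : ∀ y, (∀ i, M1 y i * M2 y i ≤ 0) → y = 0 := by
    intro y hy
    ext i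
    rw [← dLin_diag hk y i]
    refine hV _ (dLin_sym y) (fun l => ?_) i
    have := hy l
    rw [← hM1, ← hM2] at this
    exact this
  have hP : ∀ y, y ≠ 0 → ∃ i, 0 < M1 y i * M2 y i := by
    intro y hy
    by_contra! h
    exact hy (hP0 y h)
  intro q1 q2
  obtain ⟨y, -, hy⟩ := exists_lcp hn M1 M2 hP q1 q2 univ 0
  choose x hx using fun i => odd_pow_surj hodd (y i)
  have hxy : (fun i => x i ^ (m - 1)) = y := funext hx
  refine ⟨x, ⟨?_, ?_, ?_⟩, ?_⟩
  · intro i; rw [hA1, hxy]; exact (hy i (mem_univ i)).1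
  · intro i; rw [hA2, hxy]; exact (hy i (mem_univ i)).2.1
  · rw [hA1, hA2, hxy]; exact Finset.sum_eq_zero fun i hi => (hy i hi).2.2
  · rintro x' ⟨h1, h2, h3⟩
    have h3' := (Finset.sum_eq_zero_iff_of_nonneg (fun i _ => mul_nonneg (h1 i) (h2 i))).1 h3
    rw [hA1] at h1 h3'
    rw [hA2] at h2 h3'
    have hd := hP0 ((fun i => x' i ^ (m - 1)) - y) (fun i => by
      obtain ⟨p1, p2, p3⟩ := hy i (mem_univ i)
      have := compl_mul (h1 i) (h2 i) (h3' i (mem_univ i)) p1 p2 p3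
      simp only [map_sub, Pi.sub_apply]
      nlinarith)
    ext i
    apply hodd.strictMono_pow.injective
    have := congrFun hd i
    simp only [Pi.sub_apply, Pi.zero_apply] at this
    show x' i ^ (m - 1) = x i ^ (m - 1)
    rw [hx i]
    linarith
end

section
/- Let m ≥ 2 and n ≥ 1, and let A1, A2 be m-order n-dimensional real tensors that are both Z-tensors and such that the pair Ã = {A1, A2} is of type semi-positive. Then for any q1, q2 ∈ ℝⁿ with q1 < 0 and q2 < 0, the vertical tensor complementarity problem VTCP(Ã, q̃) has exactly one solution x with x > 0. -/
open Finset

/-- `A` is a Z-tensor: all off-diagonal entries (entries whose indices are not all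
equal) are non-positive. -/
def IsZTensor {n k : ℕ} (A : Fin n → (Fin k → Fin n) → ℝ) : Prop :=
  ∀ (i : Fin n) (f : Fin k → Fin n), ¬ (∀ j, f j = i) → A i f ≤ 0

lemma tProd_mono_aux {n k : ℕ} {A : Fin n → (Fin k → Fin n) → ℝ} (hZ : IsZTensor A)
    {x y : Fin n → ℝ} (hy : ∀ i, 0 ≤ y i) (hyx : ∀ i, y i ≤ x i) (i : Fin n)
    (hi : y i = x i) : tProd A x i ≤ tProd A y i := by
  unfold tProd
  apply Finset.sum_le_sum
  intro f _
  by_cases h : ∀ j, f j = i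
  · simp [h, hi]
  · apply mul_le_mul_of_nonpos_left _ (hZ i f h)
    exact Finset.prod_le_prod (fun j _ => hy _) (fun j _ => hyx _)

lemma tProd_smul_aux {n k : ℕ} (A : Fin n → (Fin k → Fin n) → ℝ) (t : ℝ)
    (x : Fin n → ℝ) (i : Fin n) : tProd A (fun l => t * x l) i = t ^ k * tProd A x i := by
  unfold tProd
  rw [Finset.mul_sum]
  apply Finset.sum_congr rfl
  intro f _
  rw [Finset.prod_mul_distrib]
  simp
  ring

lemma tProd_cont_aux {n k : ℕ} (A : Fin n → (Fin k → Fin n) → ℝ) (i : Fin n) :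
    Continuous (fun x => tProd A x i) := by
  unfold tProd
  fun_prop

lemma tProd_zero_aux {n k : ℕ} (hk : 1 ≤ k) {A : Fin n → (Fin k → Fin n) → ℝ}
    (hZ : IsZTensor A) {x : Fin n → ℝ} (hx : ∀ i, 0 ≤ x i) (i : Fin n) (hi : x i = 0) :
    tProd A x i ≤ 0 := by
  have h := tProd_mono_aux hZ (x := x) (y := fun _ => 0) (fun _ => le_rfl) hx i hi.symm
  have h0 : tProd A (fun _ => 0) i = 0 := by
    unfold tProd
    simp [Nat.pos_iff_ne_zero.mp hk]
  linarith

lemma le_aux {n k : ℕ} (hn : 1 ≤ n) (hk : 1 ≤ k) (A1 A2 : Fin n → (Fin k → Fin n) → ℝ)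
    (hZ1 : IsZTensor A1) (hZ2 : IsZTensor A2)
    (q1 q2 : Fin n → ℝ) (hq1 : ∀ i, q1 i < 0) (hq2 : ∀ i, q2 i < 0)
    (x y : Fin n → ℝ) (hx : ∀ i, 0 < x i) (hy : ∀ i, 0 < y i)
    (hsx : VTCPSol A1 A2 q1 q2 x) (hsy : VTCPSol A1 A2 q1 q2 y) : ∀ i, y i ≤ x i := by
  have : Nonempty (Fin n) := ⟨⟨0, hn⟩⟩
  obtain ⟨i, hi⟩ := Finite.exists_max (fun i => y i / x i)
  set t := y i / x i with ht
  have hyt : ∀ l, y l ≤ t * x l := fun l => (div_le_iff₀ (hx l)).1 (hi l)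
  by_cases h1 : t ≤ 1
  · intro l
    nlinarith [hyt l, hx l]
  exfalso
  push Not at h1
  have hyi : y i = t * x i := by rw [ht]; field_simp [(hx i).ne']
  have hpow : 1 < t ^ k := one_lt_pow₀ h1 (by omega)
  have key : ∀ A : Fin n → (Fin k → Fin n) → ℝ, IsZTensor A → ∀ q : Fin n → ℝ, q i < 0 →
      0 ≤ q i + tProd A x i → q i + tProd A y i ≠ 0 := by
    intro A hZ q hq h h'
    have h2 := tProd_mono_aux hZ (x := fun l => t * x l) (fun l => (hy l).le) hyt i hyi
    rw [tProd_smul_aux] at h2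
    nlinarith
  obtain ⟨a, b, c⟩ := hsy
  rw [Finset.sum_eq_zero_iff_of_nonneg (fun l _ => mul_nonneg (a l) (b l))] at c
  rcases mul_eq_zero.1 (c i (Finset.mem_univ i)) with h | h
  · exact key A1 hZ1 q1 (hq1 i) (hsx.1 i) h
  · exact key A2 hZ2 q2 (hq2 i) (hsx.2.1 i) h

lemma exists_aux {n k : ℕ} (hk : 1 ≤ k) (A1 A2 : Fin n → (Fin k → Fin n) → ℝ)
    (hZ1 : IsZTensor A1) (hZ2 : IsZTensor A2)
    (hsp : ∃ x : Fin n → ℝ, (∀ i, 0 < x i) ∧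
      (∀ i, 0 < tProd A1 x i) ∧ (∀ i, 0 < tProd A2 x i))
    (q1 q2 : Fin n → ℝ) (hq1 : ∀ i, q1 i < 0) (hq2 : ∀ i, q2 i < 0) :
    ∃ x : Fin n → ℝ, (∀ i, 0 < x i) ∧ VTCPSol A1 A2 q1 q2 x := by
  obtain ⟨u, hu, hu1, hu2⟩ := hsp
  have scale : ∃ t : ℝ, 1 ≤ t ∧ ∀ i, -q1 i / tProd A1 u i ≤ t ∧ -q2 i / tProd A2 u i ≤ t := by
    have p1 : ∀ i, 0 ≤ -q1 i / tProd A1 u i := fun i =>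
      div_nonneg (by linarith [hq1 i]) (hu1 i).le
    have p2 : ∀ i, 0 ≤ -q2 i / tProd A2 u i := fun i =>
      div_nonneg (by linarith [hq2 i]) (hu2 i).le
    have s1 := Finset.sum_nonneg (fun i (_ : i ∈ Finset.univ) => p1 i)
    have s2 := Finset.sum_nonneg (fun i (_ : i ∈ Finset.univ) => p2 i)
    refine ⟨1 + ∑ i, -q1 i / tProd A1 u i + ∑ i, -q2 i / tProd A2 u i, by linarith, ?_⟩
    intro i
    have t1 := Finset.single_le_sum (fun i _ => p1 i) (Finset.mem_univ i)
    have t2 := Finset.single_le_sum (fun i _ => p2 i) (Finset.mem_univ i)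
    constructor <;> linarith
  obtain ⟨t, ht1, ht⟩ := scale
  have htk : t ≤ t ^ k := le_self_pow₀ ht1 (by omega)
  let w : Fin n → ℝ := fun l => t * u l
  let S : Set (Fin n → ℝ) := Set.Icc 0 w ∩
    {x | ∀ i, 0 ≤ q1 i + tProd A1 x i ∧ 0 ≤ q2 i + tProd A2 x i}
  have hScomp : IsCompact S := by
    apply isCompact_Icc.inter_right
    rw [Set.ofPred_forall]
    refine isClosed_iInter fun i => ?_
    have c1 := tProd_cont_aux A1 i
    have c2 := tProd_cont_aux A2 i
    exact (isClosed_le continuous_const (continuous_const.add c1)).inter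
      (isClosed_le continuous_const (continuous_const.add c2))
  have hw : w ∈ S := by
    refine ⟨⟨fun i => mul_nonneg (by linarith) (hu i).le, le_rfl⟩, fun i => ?_⟩
    have a := (div_le_iff₀ (hu1 i)).1 (ht i).1
    have b := (div_le_iff₀ (hu2 i)).1 (ht i).2
    have a' := mul_le_mul_of_nonneg_right htk (hu1 i).le
    have b' := mul_le_mul_of_nonneg_right htk (hu2 i).le
    simp only [w, tProd_smul_aux]
    constructor <;> linarith
  obtain ⟨x, hxS, hmin⟩ := hScomp.exists_isMinOn ⟨w, hw⟩
    (f := fun x : Fin n → ℝ => ∑ i, x i) (by fun_prop)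
  obtain ⟨⟨hx0, hxw⟩, hxf⟩ := hxS
  have hx0' : ∀ i, 0 ≤ x i := fun i => hx0 i
  have hpos : ∀ i, 0 < x i := by
    intro i
    rcases (hx0' i).lt_or_eq with h | h
    · exact h
    · have := tProd_zero_aux hk hZ1 hx0' i h.symm
      linarith [(hxf i).1, hq1 i]
  refine ⟨x, hpos, fun i => (hxf i).1, fun i => (hxf i).2, ?_⟩
  apply Finset.sum_eq_zero
  intro i _
  by_contra hne
  have g1 : 0 < q1 i + tProd A1 x i := (hxf i).1.lt_of_ne (fun h => hne (by rw [← h]; simp))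
  have g2 : 0 < q2 i + tProd A2 x i := (hxf i).2.lt_of_ne (fun h => hne (by rw [← h]; simp))
  have cu : Continuous (fun s : ℝ => Function.update x i s) :=
    continuous_const.update i continuous_id
  have d1 : Continuous (fun s : ℝ => q1 i + tProd A1 (Function.update x i s) i) :=
    continuous_const.add ((tProd_cont_aux A1 i).comp cu)
  have d2 : Continuous (fun s : ℝ => q2 i + tProd A2 (Function.update x i s) i) :=
    continuous_const.add ((tProd_cont_aux A2 i).comp cu)
  have e1 := (d1.tendsto (x i)).eventually_const_lt (u := 0) (by simpa using g1)
  have e2 := (d2.tendsto (x i)).eventually_const_lt (u := 0) (by simpa using g2)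
  have e3 := lt_mem_nhds (hpos i)
  have e := ((e1.and e2).and e3).filter_mono (nhdsWithin_le_nhds (s := Set.Iio (x i)))
  obtain ⟨s, ⟨⟨s1, s2⟩, s3⟩, s4⟩ := (e.and self_mem_nhdsWithin).exists
  have s4' : s < x i := s4
  set y := Function.update x i s with hy
  have hyi : y i = s := by simp [hy]
  have hyl : ∀ l, l ≠ i → y l = x l := fun l hl => by simp [hy, hl]
  have hy0 : ∀ l, 0 ≤ y l := fun l => by
    by_cases hl : l = i
    · subst hl; rw [hyi]; exact s3.le
    · rw [hyl l hl]; exact hx0' l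
  have hyx : ∀ l, y l ≤ x l := fun l => by
    by_cases hl : l = i
    · subst hl; rw [hyi]; exact s4'.le
    · rw [hyl l hl]
  have hyS : y ∈ S := by
    refine ⟨⟨hy0, fun l => (hyx l).trans (hxw l)⟩, fun l => ?_⟩
    by_cases hl : l = i
    · subst hl; exact ⟨s1.le, s2.le⟩
    · have a := tProd_mono_aux hZ1 hy0 hyx l (hyl l hl)
      have b := tProd_mono_aux hZ2 hy0 hyx l (hyl l hl)
      constructor <;> linarith [(hxf l).1, (hxf l).2]
  have hle : ∑ l, x l ≤ ∑ l, y l := hmin hyS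
  have hlt : ∑ l, y l < ∑ l, x l :=
    Finset.sum_lt_sum (fun l _ => hyx l) ⟨i, Finset.mem_univ i, by rw [hyi]; exact s4'⟩
  linarith

/-- If `A1, A2` are Z-tensors and `{A1, A2}` is of type semi-positive, then for any
`q1 < 0`, `q2 < 0` the VTCP has exactly one positive solution. -/
theorem stmt_18 {m n : ℕ} (hm : 2 ≤ m) (hn : 1 ≤ n)
    (A1 A2 : Fin n → (Fin (m - 1) → Fin n) → ℝ)
    (hZ1 : IsZTensor A1) (hZ2 : IsZTensor A2)
    (hsp : ∃ x : Fin n → ℝ, (∀ i, 0 < x i) ∧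
      (∀ i, 0 < tProd A1 x i) ∧ (∀ i, 0 < tProd A2 x i))
    (q1 q2 : Fin n → ℝ) (hq1 : ∀ i, q1 i < 0) (hq2 : ∀ i, q2 i < 0) :
    ∃! x : Fin n → ℝ, (∀ i, 0 < x i) ∧ VTCPSol A1 A2 q1 q2 x := by
  obtain ⟨x, hx, hsx⟩ := exists_aux (by omega) A1 A2 hZ1 hZ2 hsp q1 q2 hq1 hq2
  refine ⟨x, ⟨hx, hsx⟩, ?_⟩
  rintro y ⟨hy, hsy⟩
  funext i
  exact le_antisymm
    (le_aux hn (by omega) A1 A2 hZ1 hZ2 q1 q2 hq1 hq2 x y hx hy hsx hsy i)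
    (le_aux hn (by omega) A1 A2 hZ1 hZ2 q1 q2 hq1 hq2 y x hy hx hsy hsx i)
end
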